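/- Let T be a tournament and Back the set of all back arcs of T. Then |Back| ≤ 288(ADT(T) + 1)(√(6·ADT(T) + 7) + 1). -/

import Mathlib

variable {V : Type*}

def IsTournament (E : V → V → Prop) : Prop :=
  (∀ v : V, ¬ E v v) ∧ ∀ u v : V, u ≠ v → (E u v ↔ ¬ E v u)

def Acyclic (E : V → V → Prop) : Prop :=
  ∀ v : V, ¬ Relation.TransGen E v v

noncomputable def indeg [Fintype V] (E : V → V → Prop) (v : V) : ℕ :=
  Set.ncard {u : V | E u v}

noncomputable def indegOn [Fintype V] (E : V → V → Prop) (X : Set V) (v : V) : ℕ :=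
  Set.ncard {u : V | u ∈ X ∧ E u v}

def IsTriangle (E : V → V → Prop) (t : V × V × V) : Prop :=
  E t.1 t.2.1 ∧ E t.2.1 t.2.2 ∧ E t.2.2 t.1

def triArcs (t : V × V × V) : Set (V × V) :=
  {(t.1, t.2.1), (t.2.1, t.2.2), (t.2.2, t.1)}

def IsADTFamily (E : V → V → Prop) (F : Finset (V × V × V)) : Prop :=
  (∀ t ∈ F, IsTriangle E t) ∧
    ∀ t ∈ F, ∀ s ∈ F, t ≠ s → Disjoint (triArcs t) (triArcs s)

noncomputable def ADT (E : V → V → Prop) : ℕ :=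
  sSup {n : ℕ | ∃ F : Finset (V × V × V), IsADTFamily E F ∧ F.card = n}

def IsFAS (E : V → V → Prop) (S : Finset (V × V)) : Prop :=
  Acyclic fun u v => E u v ∧ (u, v) ∉ S

noncomputable def FAST (E : V → V → Prop) : ℕ :=
  sInf {n : ℕ | ∃ S : Finset (V × V), IsFAS E S ∧ S.card = n}

def IsFVS (E : V → V → Prop) (F : Finset V) : Prop :=
  Acyclic fun a b => E a b ∧ a ∉ F ∧ b ∉ F

noncomputable def FVST [Fintype V] (E : V → V → Prop) : ℕ :=
  sInf {n : ℕ | ∃ F : Finset V, IsFVS E F ∧ F.card = n}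

noncomputable def maxdb [Fintype V] (E : V → V → Prop) : ℕ :=
  (Finset.range (Fintype.card V)).sup fun d => Set.ncard {v : V | indeg E v = d}

open Classical in
noncomputable def prefLen [Fintype V] (E : V → V → Prop) : ℕ :=
  if ∀ d < Fintype.card V, Set.ncard {v : V | indeg E v = d} = 1 then Fintype.card V
  else sInf {d : ℕ | d < Fintype.card V ∧ Set.ncard {v : V | indeg E v = d} ≠ 1}

noncomputable def prefSet [Fintype V] (E : V → V → Prop) : Set V :=
  {v : V | indeg E v < prefLen E}

noncomputable def minIndeg [Fintype V] (E : V → V → Prop) : ℕ :=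
  sInf {k : ℕ | ∃ v : V, indeg E v = k}

noncomputable def minIndegOn [Fintype V] (E : V → V → Prop) (X : Set V) : ℕ :=
  sInf {k : ℕ | ∃ v ∈ X, indegOn E X v = k}

def emptyBuckets [Fintype V] (E : V → V → Prop) : Set ℕ :=
  {d : ℕ | d < Fintype.card V ∧ {v : V | indeg E v = d} = ∅}

def backArcs [Fintype V] (E : V → V → Prop) : Set (V × V) :=
  {p : V × V | E p.1 p.2 ∧ indeg E p.2 ≤ indeg E p.1}

def reverseArc (E : V → V → Prop) (u v : V) : V → V → Prop :=
  fun a b =>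
    (¬ ((a, b) = (u, v) ∨ (a, b) = (v, u)) ∧ E a b) ∨
      ((a, b) = (u, v) ∧ E v u) ∨ ((a, b) = (v, u) ∧ E u v)

def affected [Fintype V] (E : V → V → Prop) (u v : V) : Set V :=
  {w : V | indeg E w + 1 = indeg E u ∨ indeg E w = indeg E u ∨ indeg E w = indeg E u + 1 ∨
      indeg E w + 1 = indeg E v ∨ indeg E w = indeg E v ∨ indeg E w = indeg E v + 1}

def kLong [Fintype V] (E : V → V → Prop) (k : ℕ) (p : V × V) : Prop :=
  (k : ℤ) ≤ |(indeg E p.1 : ℤ) - (indeg E p.2 : ℤ)|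

def longAdj [Fintype V] (E : V → V → Prop) (k : ℕ) (a b : V) : Prop :=
  ((a, b) ∈ backArcs E ∧ kLong E k (a, b)) ∨ ((b, a) ∈ backArcs E ∧ kLong E k (b, a))

def heavySet [Fintype V] (E : V → V → Prop) (k : ℕ) : Set V :=
  {v : V | k < Set.ncard {u : V | longAdj E k u v}}

/-!
Delete the arcs of a maximum family of arc-disjoint directed triangles. At most `3 * ADT` arcs are
lost and the remaining digraph has no directed triangle. By a theorem of Chudnovsky, Seymour and
Sullivan, the vertices of such a digraph can be ordered with at most as many backward arcs as there
are unordered pairs of non-adjacent vertices, so the tournament has an ordering with at most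
`6 * ADT` backward arcs. In any ordering, the position and the in-degree of a vertex differ by at
most the number of backward arcs at that vertex. A back arc that points forward in the ordering
therefore spans a short interval, and counting these intervals shows that there are at most `5 * m`
back arcs when `m` arcs are backward. Altogether this gives the linear bound `30 * ADT`.
-/

section Ordering

open Finset

lemma card_interedges_union_left {α β : Type*} [DecidableEq α] (r : α → β → Prop)
    [∀ a, DecidablePred (r a)] {A B : Finset α} (h : Disjoint A B) (C : Finset β) :
    #(Rel.interedges r (A ∪ B) C) = #(Rel.interedges r A C) + #(Rel.interedges r B C) := by
  classical
  rw [← card_union_of_disjoint (Rel.interedges_disjoint_left r h C)]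
  simp only [Rel.interedges, union_product, filter_union]

lemma card_interedges_union_right {α β : Type*} [DecidableEq β] (r : α → β → Prop)
    [∀ a, DecidablePred (r a)] (A : Finset α) {B C : Finset β} (h : Disjoint B C) :
    #(Rel.interedges r A (B ∪ C)) = #(Rel.interedges r A B) + #(Rel.interedges r A C) := by
  classical
  rw [← card_union_of_disjoint (Rel.interedges_disjoint_right r A h)]
  simp only [Rel.interedges, product_union, filter_union]

/-- Two distinct vertices of a digraph that are joined by no arc. -/
def Nonadj (G : V → V → Prop) (x y : V) : Prop :=
  x ≠ y ∧ ¬ G x y ∧ ¬ G y x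

instance (G : V → V → Prop) : Std.Symm (Nonadj G) :=
  ⟨fun _ _ h => ⟨h.1.symm, h.2.2, h.2.1⟩⟩

variable {α : Type*} [LinearOrder α] (G : V → V → Prop) [DecidableRel G]

instance [DecidableEq V] : DecidableRel (Nonadj G) :=
  fun _ _ => inferInstanceAs (Decidable (_ ∧ _))

/-- The arcs inside `S` that point backwards when the vertices are ordered by increasing `π`. -/
def backwardArcs (π : V → α) (S : Finset V) : Finset (V × V) :=
  {p ∈ S ×ˢ S | G p.1 p.2 ∧ π p.2 < π p.1}

/-- The vertices of `S` admit an ordering with at most `k` backward arcs. The ordering is encoded by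
a labelling with natural numbers that is injective on `S`. -/
def HasOrderingWith (S : Finset V) (k : ℕ) : Prop :=
  ∃ π : V → ℕ, Set.InjOn π S ∧ #(backwardArcs G π S) ≤ k

/-- The induced directed paths `a → b → c` in `S` that start at `a`, recorded as pairs `(b, c)`. -/
def inducedPathsFrom [DecidableEq V] (S : Finset V) (a : V) : Finset (V × V) :=
  {p ∈ S ×ˢ S | G a p.1 ∧ G p.1 p.2 ∧ Nonadj G a p.2}

/-- The induced directed paths `a → b → c` in `S` with middle vertex `b`, recorded as pairs
`(a, c)`. -/
def inducedPathsThrough [DecidableEq V] (S : Finset V) (b : V) : Finset (V × V) :=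
  {p ∈ S ×ˢ S | G p.1 b ∧ G b p.2 ∧ Nonadj G p.1 p.2}

variable {G}

lemma card_interedges_nonadj_union [DecidableEq V] {A B : Finset V} (h : Disjoint A B) :
    #(Rel.interedges (Nonadj G) (A ∪ B) (A ∪ B)) =
      #(Rel.interedges (Nonadj G) A A) + #(Rel.interedges (Nonadj G) B B) +
        2 * #(Rel.interedges (Nonadj G) A B) := by
  have hcomm : #(Rel.interedges (Nonadj G) B A) = #(Rel.interedges (Nonadj G) A B) :=
    Rel.card_interedges_comm B A
  rw [card_interedges_union_left _ h, card_interedges_union_right _ A h,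
    card_interedges_union_right _ B h, hcomm]
  ring

lemma exists_card_inducedPathsFrom_le_card_inducedPathsThrough [DecidableEq V] {S : Finset V}
    (hS : S.Nonempty) :
    ∃ v ∈ S, #(inducedPathsFrom G S v) ≤ #(inducedPathsThrough G S v) := by
  refine exists_le_of_sum_le hS (le_of_eq ?_)
  simp only [inducedPathsFrom, inducedPathsThrough, card_filter, sum_product]
  exact sum_comm

lemma HasOrderingWith.mono {S : Finset V} {k m : ℕ} (h : HasOrderingWith G S k) (hkm : k ≤ m) :
    HasOrderingWith G S m :=
  h.imp fun _ hπ => ⟨hπ.1, hπ.2.trans hkm⟩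

lemma hasOrderingWith_empty : HasOrderingWith G ∅ 0 :=
  ⟨fun _ => 0, by simp, by simp [backwardArcs]⟩

lemma hasOrderingWith_singleton (v : V) : HasOrderingWith G {v} 0 :=
  ⟨fun _ => 0, by simp, by simp [backwardArcs]⟩

lemma HasOrderingWith.union [DecidableEq V] {A B : Finset V} {k m : ℕ}
    (hA : HasOrderingWith G A k) (hB : HasOrderingWith G B m) (hAB : Disjoint A B) :
    HasOrderingWith G (A ∪ B) (k + m + #(Rel.interedges G B A)) := by
  obtain ⟨π₁, hinj₁, hcard₁⟩ := hA
  obtain ⟨π₂, hinj₂, hcard₂⟩ := hB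
  let π : V → ℕ := fun x => if x ∈ A then π₁ x else A.sup π₁ + 1 + π₂ x
  have hπA : ∀ x ∈ A, π x = π₁ x := fun x hx => if_pos hx
  have hπB : ∀ x ∈ B, π x = A.sup π₁ + 1 + π₂ x := fun x hx =>
    if_neg (disjoint_right.1 hAB hx)
  have hlt : ∀ x ∈ A, ∀ y ∈ B, π x < π y := fun x hx y hy => by
    have := le_sup (f := π₁) hx
    rw [hπA x hx, hπB y hy]
    omega
  refine ⟨π, ?_, ?_⟩
  · rw [coe_union, Set.injOn_union (disjoint_coe.2 hAB)]
    refine ⟨hinj₁.congr fun x hx => (hπA x hx).symm, fun x hx y hy hxy => hinj₂ hx hy ?_,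
      fun x hx y hy => (hlt x hx y hy).ne⟩
    rw [hπB x hx, hπB y hy] at hxy
    omega
  · have hsub : backwardArcs G π (A ∪ B) ⊆
        backwardArcs G π₁ A ∪ backwardArcs G π₂ B ∪ Rel.interedges G B A := by
      rintro ⟨x, y⟩ hxy
      simp only [backwardArcs, mem_filter, mem_product, mem_union, Rel.mem_interedges_iff]
        at hxy ⊢
      obtain ⟨⟨hx | hx, hy | hy⟩, hG, hback⟩ := hxy
      · rw [hπA x hx, hπA y hy] at hback
        exact Or.inl (Or.inl ⟨⟨hx, hy⟩, hG, hback⟩)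
      · exact absurd hback (hlt x hx y hy).not_gt
      · exact Or.inr ⟨hx, hy, hG⟩
      · rw [hπB x hx, hπB y hy, Nat.add_lt_add_iff_left] at hback
        exact Or.inl (Or.inr ⟨⟨hx, hy⟩, hG, hback⟩)
    calc #(backwardArcs G π (A ∪ B))
        ≤ #(backwardArcs G π₁ A) + #(backwardArcs G π₂ B) + #(Rel.interedges G B A) :=
          (card_le_card hsub).trans ((card_union_le _ _).trans (by grw [card_union_le]))
      _ ≤ k + m + #(Rel.interedges G B A) := by gcongr

lemma HasOrderingWith.insert_of_forall_not_arc [DecidableEq V] {A : Finset V} {k : ℕ} {v : V}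
    (hA : HasOrderingWith G A k) (hv : v ∉ A) (hAv : ∀ x ∈ A, ¬ G x v) :
    HasOrderingWith G (insert v A) k := by
  have hnone : Rel.interedges G A {v} = ∅ := by
    simpa [Rel.interedges, filter_eq_empty_iff] using hAv
  have hord := (hasOrderingWith_singleton v).union hA (disjoint_singleton_left.2 hv)
  simpa [hnone] using hord

end Ordering

section TriangleFree

open Finset

variable [DecidableEq V] {G : V → V → Prop} [DecidableRel G]

lemma interedges_insert_subset_inducedPathsFrom (htri : ∀ t, ¬ IsTriangle G t) (S : Finset V)
    (v : V) :
    Rel.interedges G (insert v {x ∈ S | G v x}) {x ∈ S | x ≠ v ∧ ¬ G v x} ⊆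
      inducedPathsFrom G S v := by
  rintro ⟨x, y⟩ hxy
  simp only [Rel.mem_interedges_iff, mem_insert, mem_filter] at hxy
  obtain ⟨rfl | ⟨hxS, hvx⟩, ⟨hyS, hyv, hvy⟩, hG⟩ := hxy
  · exact absurd hG hvy
  · exact mem_filter.2
      ⟨mk_mem_product hxS hyS, hvx, hG, hyv.symm, hvy, fun h => htri (v, x, y) ⟨hvx, hG, h⟩⟩

lemma inducedPathsThrough_subset_interedges (hG : ∀ x y, G x y → ¬ G y x) (S : Finset V) (v : V) :
    inducedPathsThrough G S v ⊆
      Rel.interedges (Nonadj G) {x ∈ S | x ≠ v ∧ ¬ G v x} (insert v {x ∈ S | G v x}) := by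
  rintro ⟨x, y⟩ hxy
  simp only [inducedPathsThrough, mem_filter, mem_product] at hxy
  obtain ⟨⟨hxS, hyS⟩, hxv, hvy, hnonadj⟩ := hxy
  simp only [Rel.mem_interedges_iff, mem_insert, mem_filter]
  exact ⟨⟨hxS, fun h => hG x v hxv (h ▸ h ▸ hxv), hG x v hxv⟩, Or.inr ⟨hyS, hvy⟩, hnonadj⟩

lemma disjoint_filter_insert_filter (S : Finset V) (v : V) (P : V → Prop) [DecidablePred P] :
    Disjoint {x ∈ S | x ≠ v ∧ ¬ P x} (insert v {x ∈ S | P x}) := by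
  rw [disjoint_left]
  simp only [mem_filter, mem_insert]
  tauto

lemma filter_union_insert_filter {S : Finset V} {v : V} (hv : v ∈ S) (P : V → Prop)
    [DecidablePred P] :
    {x ∈ S | x ≠ v ∧ ¬ P x} ∪ insert v {x ∈ S | P x} = S := by
  ext x
  obtain rfl | hx := eq_or_ne x v
  · simp [hv]
  · simp only [mem_filter, mem_union, mem_insert]
    tauto

/- The induction places a vertex `v` directly before its out-neighbours and after everything else.
The new backward arcs give induced paths starting at `v`, and the induced paths through `v` give new
non-adjacent pairs; summed over `v`, both families of paths are equally numerous. -/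
theorem hasOrderingWith_half_card_nonadj (hG : ∀ x y, G x y → ¬ G y x)
    (htri : ∀ t, ¬ IsTriangle G t) (S : Finset V) :
    HasOrderingWith G S (#(Rel.interedges (Nonadj G) S S) / 2) := by
  induction S using Finset.strongInduction with
  | H S ih =>
  obtain rfl | hS := S.eq_empty_or_nonempty
  · exact hasOrderingWith_empty.mono (Nat.zero_le _)
  obtain ⟨v, hv, hpaths⟩ := exists_card_inducedPathsFrom_le_card_inducedPathsThrough (G := G) hS
  have hvv : ¬ G v v := fun h => hG v v h h
  set B := {x ∈ S | x ≠ v ∧ ¬ G v x}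
  set A := {x ∈ S | G v x}
  have hvA : v ∉ A := fun h => hvv (mem_filter.1 h).2
  have hBA : Disjoint B (insert v A) := disjoint_filter_insert_filter S v (G v)
  have hS_eq : B ∪ insert v A = S := filter_union_insert_filter hv (G v)
  have hB_ord := ih B (filter_ssubset.2 ⟨v, hv, by simp⟩)
  have hA_ord := ih A (filter_ssubset.2 ⟨v, hv, hvv⟩)
  have hvA_ord := hA_ord.insert_of_forall_not_arc hvA fun x hx => hG v x (mem_filter.1 hx).2
  have hord := hB_ord.union hvA_ord hBA
  have hnonadj := card_interedges_nonadj_union (G := G) hBA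
  rw [hS_eq] at hord hnonadj
  have harcs : #(Rel.interedges G (insert v A) B) ≤
      #(Rel.interedges (Nonadj G) B (insert v A)) :=
    calc #(Rel.interedges G (insert v A) B)
        ≤ #(inducedPathsFrom G S v) :=
          card_le_card (interedges_insert_subset_inducedPathsFrom htri S v)
      _ ≤ #(inducedPathsThrough G S v) := hpaths
      _ ≤ #(Rel.interedges (Nonadj G) B (insert v A)) :=
          card_le_card (inducedPathsThrough_subset_interedges hG S v)
  have hmono : #(Rel.interedges (Nonadj G) A A) ≤
      #(Rel.interedges (Nonadj G) (insert v A) (insert v A)) :=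
    card_le_card (Rel.interedges_mono (subset_insert v A) (subset_insert v A))
  exact hord.mono (by omega)

end TriangleFree

section Rank

open Finset

variable [Fintype V] {α : Type*} [LinearOrder α]

/-- The position, counted from `0`, of a vertex in the ordering by increasing `π`. -/
def rank (π : V → α) (v : V) : ℕ :=
  #{u | π u < π v}

/-- The number of arcs entering `v` that point backwards in the ordering by increasing `π`. -/
def backwardIndeg (E : V → V → Prop) [DecidableRel E] (π : V → α) (v : V) : ℕ :=
  #{u | E u v ∧ π v < π u}

/-- The number of arcs leaving `v` that point backwards in the ordering by increasing `π`. -/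
def backwardOutdeg (E : V → V → Prop) [DecidableRel E] (π : V → α) (v : V) : ℕ :=
  #{w | E v w ∧ π w < π v}

lemma rank_lt_rank {π : V → α} {u v : V} (h : π u < π v) : rank π u < rank π v := by
  refine card_lt_card (ssubset_iff_of_subset (monotone_filter_right _ fun _ _ hw => hw.trans h) |>.2
    ⟨u, ?_, ?_⟩) <;> simp [h]

lemma rank_injective {π : V → α} (hπ : Function.Injective π) : Function.Injective (rank π) := by
  intro u v huv
  by_contra hne
  obtain h | h := (hπ.ne hne).lt_or_gt
  · exact (rank_lt_rank h).ne huv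
  · exact (rank_lt_rank h).ne' huv

lemma card_filter_le_add_fst_le_sum {r : V → ℕ} (hr : Function.Injective r) (f : V → ℕ) :
    #{p : V × V | r p.1 < r p.2 ∧ r p.2 ≤ r p.1 + f p.1} ≤ ∑ v, f v := by
  rw [card_filter, Fintype.sum_prod_type]
  refine sum_le_sum fun u _ => ?_
  rw [← card_filter]
  calc #{v | r u < r v ∧ r v ≤ r u + f u}
      ≤ #(Ioc (r u) (r u + f u)) :=
        card_le_card_of_injOn r (fun v hv => by simpa using hv) hr.injOn
    _ = f u := by simp

lemma card_filter_le_add_snd_le_sum {r : V → ℕ} (hr : Function.Injective r) (f : V → ℕ) :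
    #{p : V × V | r p.1 < r p.2 ∧ r p.2 ≤ r p.1 + f p.2} ≤ ∑ v, f v := by
  rw [card_filter, Fintype.sum_prod_type_right]
  refine sum_le_sum fun v _ => ?_
  rw [← card_filter]
  calc #{u | r u < r v ∧ r v ≤ r u + f v}
      ≤ #(Ico (r v - f v) (r v)) :=
        card_le_card_of_injOn r (fun u hu => by simpa [and_comm] using hu) hr.injOn
    _ ≤ f v := by rw [Nat.card_Ico]; omega

variable {E : V → V → Prop} [DecidableRel E]

lemma sum_backwardIndeg (π : V → α) : ∑ v, backwardIndeg E π v = #(backwardArcs E π univ) := by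
  simp only [backwardIndeg, backwardArcs, card_filter, univ_product_univ]
  rw [Fintype.sum_prod_type_right]

lemma sum_backwardOutdeg (π : V → α) : ∑ v, backwardOutdeg E π v = #(backwardArcs E π univ) := by
  simp only [backwardOutdeg, backwardArcs, card_filter, univ_product_univ]
  rw [Fintype.sum_prod_type]

lemma indeg_eq_card_filter (v : V) : indeg E v = #{u | E u v} := by
  rw [indeg, ← Set.ncard_coe_finset, coe_filter_univ]

end Rank

namespace IsTournament

open Finset

variable {E : V → V → Prop}

lemma asymm (hT : IsTournament E) (x y : V) (h : E x y) : ¬ E y x := by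
  obtain rfl | hne := eq_or_ne x y
  · exact hT.1 x
  · exact (hT.2 x y hne).1 h

section Order

variable [Fintype V] [DecidableRel E] {α : Type*} [LinearOrder α] {π : V → α}

lemma indeg_le_rank_add_backwardIndeg (hT : IsTournament E) (hπ : Function.Injective π) (v : V) :
    indeg E v ≤ rank π v + backwardIndeg E π v := by
  classical
  rw [indeg_eq_card_filter]
  refine (card_le_card fun u hu => ?_).trans (card_union_le _ _)
  simp only [mem_filter, mem_univ, true_and, mem_union] at hu ⊢
  have hne : u ≠ v := fun h => hT.1 v (h ▸ hu)
  exact (hπ.ne hne).lt_or_gt.imp_right fun h => ⟨hu, h⟩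

lemma rank_le_indeg_add_backwardOutdeg (hT : IsTournament E) (v : V) :
    rank π v ≤ indeg E v + backwardOutdeg E π v := by
  classical
  rw [indeg_eq_card_filter]
  refine (card_le_card fun u hu => ?_).trans (card_union_le _ _)
  simp only [mem_filter, mem_univ, true_and, mem_union] at hu ⊢
  have hne : v ≠ u := by rintro rfl; exact lt_irrefl _ hu
  exact or_iff_not_imp_left.2 fun h => ⟨(hT.2 v u hne).2 h, hu⟩

/- A back arc `uv` that is not backward satisfies
`rank v - rank u ≤ backwardIndeg u + backwardOutdeg v`, so one of the two summands is at least half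
of the left-hand side. -/
theorem ncard_backArcs_le_five_mul (hT : IsTournament E) (hπ : Function.Injective π) :
    Set.ncard (backArcs E) ≤ 5 * #(backwardArcs E π univ) := by
  classical
  let nearIn : Finset (V × V) :=
    {p | rank π p.1 < rank π p.2 ∧ rank π p.2 ≤ rank π p.1 + 2 * backwardIndeg E π p.1}
  let nearOut : Finset (V × V) :=
    {p | rank π p.1 < rank π p.2 ∧ rank π p.2 ≤ rank π p.1 + 2 * backwardOutdeg E π p.2}
  have hnearIn : #nearIn ≤ 2 * #(backwardArcs E π univ) := by
    rw [← sum_backwardIndeg, mul_sum]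
    exact card_filter_le_add_fst_le_sum (rank_injective hπ) (2 * backwardIndeg E π ·)
  have hnearOut : #nearOut ≤ 2 * #(backwardArcs E π univ) := by
    rw [← sum_backwardOutdeg, mul_sum]
    exact card_filter_le_add_snd_le_sum (rank_injective hπ) (2 * backwardOutdeg E π ·)
  have hcover : backArcs E ⊆ (backwardArcs E π univ ∪ nearIn ∪ nearOut : Finset (V × V)) := by
    rintro ⟨u, v⟩ ⟨hE : E u v, hdeg : indeg E v ≤ indeg E u⟩
    simp only [coe_union, Set.mem_union, mem_coe, backwardArcs, nearIn, nearOut, mem_filter,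
      mem_univ, true_and, univ_product_univ]
    have hne : u ≠ v := fun h => hT.1 v (h ▸ hE)
    obtain hforward | hbackward := (hπ.ne hne).lt_or_gt
    · have hrank := rank_lt_rank hforward
      have hu := hT.indeg_le_rank_add_backwardIndeg hπ u
      have hv := hT.rank_le_indeg_add_backwardOutdeg (π := π) v
      omega
    · exact Or.inl (Or.inl ⟨hE, hbackward⟩)
  calc Set.ncard (backArcs E)
      ≤ #(backwardArcs E π univ ∪ nearIn ∪ nearOut) := by
        rw [← Set.ncard_coe_finset]
        exact Set.ncard_le_ncard hcover (finite_toSet _)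
    _ ≤ #(backwardArcs E π univ) + #nearIn + #nearOut :=
        (card_union_le _ _).trans (by grw [card_union_le])
    _ ≤ 5 * #(backwardArcs E π univ) := by omega

theorem exists_injective_card_backwardArcs_le (hT : IsTournament E)
    {R : Finset (V × V)} (hR : ∀ t, IsTriangle E t → ∃ p ∈ triArcs t, p ∈ R) :
    ∃ π : V → ℕ, Function.Injective π ∧ #(backwardArcs E π univ) ≤ 2 * #R := by
  classical
  let G : V → V → Prop := fun x y => E x y ∧ (x, y) ∉ R
  have hG : ∀ x y, G x y → ¬ G y x := fun x y h h' => hT.asymm x y h.1 h'.1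
  have htri : ∀ t, ¬ IsTriangle G t := by
    rintro t ⟨h₁, h₂, h₃⟩
    obtain ⟨p, rfl | rfl | rfl, hp⟩ := hR t ⟨h₁.1, h₂.1, h₃.1⟩
    exacts [h₁.2 hp, h₂.2 hp, h₃.2 hp]
  obtain ⟨π, hinj, hback⟩ := hasOrderingWith_half_card_nonadj hG htri univ
  have hnonadj : #(Rel.interedges (Nonadj G) univ univ) ≤ 2 * #R := by
    have hsub : Rel.interedges (Nonadj G) univ univ ⊆ R ∪ R.image Prod.swap := by
      rintro ⟨x, y⟩ hxy
      obtain ⟨-, -, hne, hxy, hyx⟩ := Rel.mem_interedges_iff.1 hxy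
      have := hT.2 x y hne
      simp only [mem_union, mem_image, Prod.exists, Prod.swap_prod_mk, Prod.mk.injEq]
      grind
    calc #(Rel.interedges (Nonadj G) univ univ)
        ≤ #R + #(R.image Prod.swap) := (card_le_card hsub).trans (card_union_le _ _)
      _ ≤ 2 * #R := by grw [card_image_le, two_mul]
  have hsplit : backwardArcs E π univ ⊆ backwardArcs G π univ ∪ R := by
    rintro ⟨x, y⟩ hxy
    simp only [backwardArcs, mem_filter, mem_union, mem_product, mem_univ, true_and, G] at hxy ⊢
    tauto
  refine ⟨π, by simpa using hinj, ?_⟩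
  calc #(backwardArcs E π univ)
      ≤ #(backwardArcs G π univ) + #R := (card_le_card hsplit).trans (card_union_le _ _)
    _ ≤ 2 * #R := by omega

end Order

end IsTournament

section Packing

open Finset

variable {E : V → V → Prop}

lemma bddAbove_card_isADTFamily [Finite V] (E : V → V → Prop) :
    BddAbove {n : ℕ | ∃ F : Finset (V × V × V), IsADTFamily E F ∧ #F = n} := by
  have := Fintype.ofFinite V
  refine ⟨Fintype.card (V × V × V), ?_⟩
  rintro _ ⟨F, -, rfl⟩
  exact card_le_univ F

lemma IsADTFamily.card_le_ADT [Finite V] {F : Finset (V × V × V)} (hF : IsADTFamily E F) :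
    #F ≤ ADT E :=
  le_csSup (bddAbove_card_isADTFamily E) ⟨F, hF, rfl⟩

lemma exists_isADTFamily_card_eq_ADT [Finite V] (E : V → V → Prop) :
    ∃ F : Finset (V × V × V), IsADTFamily E F ∧ #F = ADT E :=
  Nat.sSup_mem (s := {n : ℕ | ∃ F : Finset (V × V × V), IsADTFamily E F ∧ #F = n})
    ⟨0, ∅, ⟨by simp, by simp⟩, rfl⟩ (bddAbove_card_isADTFamily E)

lemma IsADTFamily.insert [DecidableEq V] {F : Finset (V × V × V)} (hF : IsADTFamily E F)
    {t : V × V × V} (ht : IsTriangle E t) (hdisj : ∀ s ∈ F, Disjoint (triArcs t) (triArcs s)) :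
    IsADTFamily E (insert t F) := by
  refine ⟨forall_mem_insert _ _ _ |>.2 ⟨ht, hF.1⟩, fun a ha b hb hab => ?_⟩
  obtain rfl | haF := mem_insert.1 ha <;> obtain rfl | hbF := mem_insert.1 hb
  · exact absurd rfl hab
  · exact hdisj b hbF
  · exact (hdisj a haF).symm
  · exact hF.2 a haF b hbF hab

theorem exists_arcs_meeting_triangles_card_le [Finite V] (E : V → V → Prop) :
    ∃ R : Finset (V × V), #R ≤ 3 * ADT E ∧ ∀ t, IsTriangle E t → ∃ p ∈ triArcs t, p ∈ R := by
  classical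
  obtain ⟨F, hF, hcard⟩ := exists_isADTFamily_card_eq_ADT E
  let R : Finset (V × V) := F.biUnion fun t => {(t.1, t.2.1), (t.2.1, t.2.2), (t.2.2, t.1)}
  have hR : ∀ {p}, p ∈ R ↔ ∃ t ∈ F, p ∈ triArcs t := by simp [R, triArcs]
  refine ⟨R, ?_, fun t ht => ?_⟩
  · rw [← hcard, mul_comm]
    exact card_biUnion_le_card_mul _ _ _ fun _ _ => card_le_three
  by_contra! hmiss
  have hnotMem : t ∉ F := fun htF =>
    hmiss (t.1, t.2.1) (Or.inl rfl) (hR.2 ⟨t, htF, Or.inl rfl⟩)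
  have hfam : IsADTFamily E (insert t F) := hF.insert ht fun s hs =>
    Set.disjoint_left.2 fun p hpt hps => hmiss p hpt (hR.2 ⟨s, hs, hps⟩)
  have hle := hfam.card_le_ADT
  rw [card_insert_of_notMem hnotMem] at hle
  omega

theorem stmt12_general [Fintype V] (E : V → V → Prop) (hT : IsTournament E) :
    Set.ncard (backArcs E) ≤ 30 * ADT E := by
  classical
  obtain ⟨R, hRcard, hR⟩ := exists_arcs_meeting_triangles_card_le E
  obtain ⟨π, hπ, hback⟩ := hT.exists_injective_card_backwardArcs_le hR
  calc Set.ncard (backArcs E)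
      ≤ 5 * #(backwardArcs E π univ) := hT.ncard_backArcs_le_five_mul hπ
    _ ≤ 30 * ADT E := by omega

end Packing

/-- |Back| ≤ 288(ADT(T) + 1)(√(6·ADT(T) + 7) + 1). -/
theorem stmt12 [Fintype V] (E : V → V → Prop) (hT : IsTournament E) :
    (Set.ncard (backArcs E) : ℝ) ≤
      288 * ((ADT E : ℝ) + 1) * (Real.sqrt (6 * (ADT E : ℝ) + 7) + 1) := by
  have hlin : (Set.ncard (backArcs E) : ℝ) ≤ 30 * ADT E := mod_cast stmt12_general E hT
  nlinarith [Real.sqrt_nonneg (6 * (ADT E : ℝ) + 7), Nat.cast_nonneg (α := ℝ) (ADT E)]
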